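/- Let N ∈ ℕ and let q, a, b, t ∈ ℂ satisfy a ≠ 0, (q;q)_N ≠ 0, (bq;q)_N ≠ 0 and (t;q)_{N+1} ≠ 0. Then F_N(a,b;t) = (1−tq^N)/(1−t) · Σ_{n=0}^{N} (−1)^n [N,n]_q (b/a;q)_n (q;q)_n (at)^n q^{n(n+1)/2} / ((bq;q)_n (tq;q)_n). -/

import Mathlib

/-!
Expand the quotient `(aq;q)_n / (bq;q)_n` by the `q`-Chu–Vandermonde sum
`(aq;q)_n / (bq;q)_n = ∑_k [n,k] (b/a;q)_k (-a)^k q^{k(k+1)/2} / (bq;q)_k`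
(`sum_gauss_shift`, in denominator-free form), insert this in `F_N(a,b;t)` and exchange the two
sums. With `n = k + m` and `M = N - k`, the inner sum over `n` is a multiple of
`∑_m [M,m] (q^{k+1};q)_m (t;q)_{M-m} t^m`, which the other form of `q`-Chu–Vandermonde
(`sum_gauss_mul`) evaluates as `(t q^{k+1};q)_M`.

Both summations are polynomial identities once the Gaussian binomials are defined by the `q`-Pascal
rule, and each follows from that rule by induction on the upper index.
-/

open Finset

/-- The q-Pochhammer symbol (z; q)_n = prod_{j=0}^{n-1} (1 - z q^j). -/
noncomputable def qPoch (q z : ℂ) (n : ℕ) : ℂ :=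
  ∏ j ∈ Finset.range n, (1 - z * q ^ j)

/-- The Gaussian binomial coefficient [N, n]_q = (q;q)_N / ((q;q)_n (q;q)_{N-n}). -/
noncomputable def qBinom (q : ℂ) (N n : ℕ) : ℂ :=
  qPoch q q N / (qPoch q q n * qPoch q q (N - n))

/-- The finite analogue of Fine's function,
F_N(a, b; t) = sum_{n=0}^{N} [N,n]_q (aq;q)_n (t;q)_{N-n} (q;q)_n t^n / ((bq;q)_n (t;q)_N). -/
noncomputable def fineF (q a b t : ℂ) (N : ℕ) : ℂ :=
  ∑ n ∈ Finset.range (N + 1),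
    qBinom q N n * (qPoch q (a * q) n * qPoch q t (N - n) * qPoch q q n * t ^ n) /
      (qPoch q (b * q) n * qPoch q t N)

/-- The Gaussian binomial coefficient defined by the `q`-Pascal recurrence. It is polynomial in `q`,
so it makes sense even where the quotient `qBinom` has a vanishing denominator, and it is `0` for
`k > n`. -/
noncomputable def gauss (q : ℂ) : ℕ → ℕ → ℂ
  | _, 0 => 1
  | 0, _ + 1 => 0
  | n + 1, k + 1 => q ^ (n - k) * gauss q n k + gauss q n (k + 1)

lemma gauss_zero_right (q : ℂ) (n : ℕ) : gauss q n 0 = 1 := by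
  cases n <;> rfl

lemma gauss_eq_zero (q : ℂ) : ∀ n k : ℕ, n < k → gauss q n k = 0
  | _, 0, h => absurd h (Nat.not_lt_zero _)
  | 0, _ + 1, _ => rfl
  | n + 1, k + 1, h => by
    rw [gauss, gauss_eq_zero q n k (by omega), gauss_eq_zero q n (k + 1) (by omega)]
    ring

lemma qPoch_zero (q z : ℂ) : qPoch q z 0 = 1 := by simp [qPoch]

lemma qPoch_succ (q z : ℂ) (n : ℕ) : qPoch q z (n + 1) = qPoch q z n * (1 - z * q ^ n) := by
  simp [qPoch, Finset.prod_range_succ]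

lemma qPoch_add (q z : ℂ) (m n : ℕ) :
    qPoch q z (m + n) = qPoch q z m * qPoch q (z * q ^ m) n := by
  simp only [qPoch, Finset.prod_range_add, pow_add, mul_assoc]

lemma qPoch_succ' (q z : ℂ) (n : ℕ) : qPoch q z (n + 1) = (1 - z) * qPoch q (z * q) n := by
  rw [add_comm, qPoch_add]
  simp [qPoch]

lemma qPoch_ne_zero_of_le {q z : ℂ} {m n : ℕ} (h : qPoch q z n ≠ 0) (hmn : m ≤ n) :
    qPoch q z m ≠ 0 := by
  obtain ⟨d, rfl⟩ := Nat.exists_eq_add_of_le hmn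
  rw [qPoch_add] at h
  exact left_ne_zero_of_mul h

lemma gauss_mul_qPoch (q : ℂ) (n : ℕ) : ∀ k, k ≤ n →
    gauss q n k * (qPoch q q k * qPoch q q (n - k)) = qPoch q q n := by
  induction n with
  | zero =>
    intro k hk
    obtain rfl : k = 0 := by omega
    simp [gauss, qPoch]
  | succ n ih =>
    rintro (_ | k) hk
    · simp [gauss, qPoch_zero]
    · have h1 := ih k (by omega)
      rw [gauss, Nat.add_sub_add_right, qPoch_succ, qPoch_succ]
      rcases Nat.lt_or_ge k n with hlt | hge
      · obtain ⟨d, rfl⟩ := Nat.exists_eq_add_of_lt hlt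
        have h2 := ih (k + 1) (by omega)
        rw [show k + d + 1 - k = d + 1 by omega] at *
        rw [show k + d + 1 - (k + 1) = d by omega] at h2
        rw [qPoch_succ] at h2
        rw [qPoch_succ q q d] at *
        linear_combination (q ^ (d + 1) * (1 - q * q ^ k)) * h1 + (1 - q * q ^ d) * h2
      · obtain rfl : k = n := by omega
        rw [gauss_eq_zero q k (k + 1) (by omega)]
        simp only [Nat.sub_self, pow_zero] at *
        linear_combination (1 - q * q ^ k) * h1

/-- Summation form of the `q`-Pascal rule; it drives both inductions below. -/
lemma sum_gauss_succ (q : ℂ) (n : ℕ) (f : ℕ → ℂ) :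
    ∑ k ∈ range (n + 2), gauss q (n + 1) k * f k =
      ∑ k ∈ range (n + 1), gauss q n k * (f k + q ^ (n - k) * f (k + 1)) := by
  have h : ∑ k ∈ range (n + 1), gauss q n k * f k =
      ∑ k ∈ range (n + 1), gauss q n (k + 1) * f (k + 1) + gauss q n 0 * f 0 := by
    rw [← Finset.sum_range_succ' (fun k => gauss q n k * f k) (n + 1),
      Finset.sum_range_succ _ (n + 1), gauss_eq_zero q n (n + 1) (by omega)]
    ring
  simp only [mul_add, Finset.sum_add_distrib]
  rw [h, Finset.sum_range_succ', gauss_zero_right, gauss_zero_right]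
  simp only [gauss, add_mul, Finset.sum_add_distrib]
  rw [Finset.sum_congr rfl fun k _ =>
    show q ^ (n - k) * gauss q n k * f (k + 1) = gauss q n k * (q ^ (n - k) * f (k + 1)) by ring]
  ring

/-- `q`-Chu–Vandermonde: `∑_m [M,m] (α;q)_m (β;q)_{M-m} β^m = (αβ;q)_M`. -/
lemma sum_gauss_mul (q α β : ℂ) (M : ℕ) :
    ∑ m ∈ range (M + 1), gauss q M m * (qPoch q α m * qPoch q β (M - m) * β ^ m) =
      qPoch q (α * β) M := by
  induction M with
  | zero => simp [gauss, qPoch]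
  | succ M ih =>
    rw [sum_gauss_succ, qPoch_succ, ← ih, Finset.sum_mul]
    refine Finset.sum_congr rfl fun m hm => ?_
    obtain ⟨d, rfl⟩ := Nat.exists_eq_add_of_le (Nat.le_of_lt_succ (Finset.mem_range.mp hm))
    rw [show m + d + 1 - m = d + 1 by omega, show m + d + 1 - (m + 1) = d by omega,
      show m + d - m = d by omega, qPoch_succ, qPoch_succ]
    ring

/-- The homogenised symbol `a^k (b/a;q)_k = ∏_{j<k} (a - b q^j)`, polynomial in `a` and `b`. -/
noncomputable def homPoch (q a b : ℂ) (k : ℕ) : ℂ :=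
  ∏ j ∈ range k, (a - b * q ^ j)

lemma homPoch_succ' (q a b : ℂ) (k : ℕ) :
    homPoch q a b (k + 1) = (a - b) * homPoch q a (b * q) k := by
  rw [homPoch, Finset.prod_range_succ', homPoch, mul_comm]
  simp only [pow_zero, mul_one, pow_succ', mul_assoc]

lemma homPoch_eq {q a b : ℂ} (ha : a ≠ 0) (k : ℕ) :
    homPoch q a b k = qPoch q (b / a) k * a ^ k := by
  induction k with
  | zero => simp [homPoch, qPoch]
  | succ k ih =>
    rw [homPoch, Finset.prod_range_succ, ← homPoch, ih, qPoch_succ]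
    field_simp
    ring

lemma triangle_succ (k : ℕ) : (k + 1) * (k + 1 + 1) / 2 = k * (k + 1) / 2 + (k + 1) := by
  rw [show (k + 1) * (k + 1 + 1) = k * (k + 1) + (k + 1) * 2 by ring,
    Nat.add_mul_div_right _ _ two_pos]

/-- `q`-Chu–Vandermonde, cleared of denominators:
`∑_k [n,k] (-a)^k (b/a;q)_k q^{k(k+1)/2} (b q^{k+1};q)_{n-k} = (aq;q)_n`. The induction has to vary
`b`, because the `q`-Pascal rule yields
`S_{n+1}(b) = (1 - b q^{n+1}) S_n(b) - (a - b) q^{n+1} S_n(bq)` for the left side `S_n(b)`. -/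
lemma sum_gauss_shift (q a : ℂ) (n : ℕ) : ∀ b : ℂ,
    ∑ k ∈ range (n + 1), gauss q n k * ((-1) ^ k * homPoch q a b k * q ^ (k * (k + 1) / 2) *
      qPoch q (b * q * q ^ k) (n - k)) = qPoch q (a * q) n := by
  induction n with
  | zero => intro b; simp [gauss, homPoch, qPoch]
  | succ n ih =>
    intro b
    rw [sum_gauss_succ, qPoch_succ]
    have key : qPoch q (a * q) n * (1 - a * q * q ^ n) =
        (1 - b * q * q ^ n) * qPoch q (a * q) n -
          (a - b) * (q * q ^ n) * qPoch q (a * q) n := by ring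
    rw [key]
    nth_rewrite 1 [← ih b]
    rw [← ih (b * q), Finset.mul_sum, Finset.mul_sum, ← Finset.sum_sub_distrib]
    refine Finset.sum_congr rfl fun k hk => ?_
    obtain ⟨d, rfl⟩ := Nat.exists_eq_add_of_le (Nat.le_of_lt_succ (Finset.mem_range.mp hk))
    rw [show k + d + 1 - k = d + 1 by omega, show k + d + 1 - (k + 1) = d by omega,
      show k + d - k = d by omega, qPoch_succ, homPoch_succ', triangle_succ,
      show b * q * q ^ (k + 1) = b * q * q * q ^ k by ring]
    ring

lemma div_qPoch_eq_sum {q a b : ℂ} {n : ℕ} (hb : qPoch q (b * q) n ≠ 0) :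
    qPoch q (a * q) n / qPoch q (b * q) n =
      ∑ k ∈ range (n + 1), gauss q n k *
        ((-1) ^ k * homPoch q a b k * q ^ (k * (k + 1) / 2) / qPoch q (b * q) k) := by
  rw [← sum_gauss_shift q a n b, Finset.sum_div]
  refine Finset.sum_congr rfl fun k hk => ?_
  obtain ⟨d, rfl⟩ := Nat.exists_eq_add_of_le (Nat.le_of_lt_succ (Finset.mem_range.mp hk))
  rw [qPoch_add] at hb ⊢
  have h1 := left_ne_zero_of_mul hb
  have h2 := right_ne_zero_of_mul hb
  rw [Nat.add_sub_cancel_left]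
  field_simp

/-- The inner sum left after the exchange of summations. -/
lemma fine_inner_sum {q t : ℂ} {N k : ℕ} (hq : qPoch q q N ≠ 0) (hk : k ≤ N) :
    (∑ n ∈ range (N + 1),
      qBinom q N n * qPoch q q n * qPoch q t (N - n) * t ^ n * gauss q n k) * qPoch q t (k + 1) =
      qBinom q N k * qPoch q q k * t ^ k * qPoch q t (N + 1) := by
  obtain ⟨M, rfl⟩ := Nat.exists_eq_add_of_le hk
  have hqk := qPoch_ne_zero_of_le hq hk
  have hqM := qPoch_ne_zero_of_le hq (Nat.le_add_left M k)
  have hzero : ∑ n ∈ range k, qBinom q (k + M) n * qPoch q q n * qPoch q t (k + M - n) * t ^ n *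
      gauss q n k = 0 :=
    Finset.sum_eq_zero fun n hn => by
      rw [gauss_eq_zero q n k (Finset.mem_range.mp hn), mul_zero]
  have hterm : ∀ m ∈ range (M + 1), qBinom q (k + M) (k + m) * qPoch q q (k + m) *
      qPoch q t (k + M - (k + m)) * t ^ (k + m) * gauss q (k + m) k =
      qBinom q (k + M) k * qPoch q q k * t ^ k *
        (gauss q M m * (qPoch q (q * q ^ k) m * qPoch q t (M - m) * t ^ m)) := by
    intro m hm
    have hmM : m ≤ M := Nat.le_of_lt_succ (Finset.mem_range.mp hm)
    have g1 := gauss_mul_qPoch q M m hmM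
    have g2 := gauss_mul_qPoch q (k + m) k (by omega)
    have hqm := qPoch_ne_zero_of_le hq (show m ≤ k + M by omega)
    have hqMm := qPoch_ne_zero_of_le hq (show M - m ≤ k + M by omega)
    have hqkm := qPoch_ne_zero_of_le hq (show k + m ≤ k + M by omega)
    rw [Nat.add_sub_cancel_left, qPoch_add] at g2
    rw [← eq_div_iff (mul_ne_zero hqm hqMm)] at g1
    rw [← eq_div_iff (mul_ne_zero hqk hqm)] at g2
    rw [g1, g2, qBinom, qBinom, Nat.add_sub_add_left, Nat.add_sub_cancel_left, pow_add]
    field_simp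
  rw [add_assoc, Finset.sum_range_add, hzero, zero_add, Finset.sum_congr rfl hterm,
    ← Finset.mul_sum, sum_gauss_mul, show k + (M + 1) = k + 1 + M by ring, qPoch_add q t (k + 1) M,
    show q * q ^ k * t = t * q ^ (k + 1) by ring]
  ring


theorem fineF_lemma4fin (N : ℕ) (q a b t : ℂ) (ha0 : a ≠ 0)
    (hq : qPoch q q N ≠ 0) (hb : qPoch q (b * q) N ≠ 0)
    (ht : qPoch q t (N + 1) ≠ 0) :
    fineF q a b t N =
      (1 - t * q ^ N) / (1 - t) *
        ∑ n ∈ Finset.range (N + 1),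
          (-1) ^ n * qBinom q N n *
            (qPoch q (b / a) n * qPoch q q n * (a * t) ^ n * q ^ (n * (n + 1) / 2)) /
              (qPoch q (b * q) n * qPoch q (t * q) n) := by
  have ht0 : 1 - t ≠ 0 := by
    rw [qPoch_succ'] at ht
    exact left_ne_zero_of_mul ht
  have htN : qPoch q t N ≠ 0 := qPoch_ne_zero_of_le ht (Nat.le_succ N)
  have hexpand : fineF q a b t N = ∑ n ∈ range (N + 1), ∑ k ∈ range (N + 1),
      (-1) ^ k * homPoch q a b k * q ^ (k * (k + 1) / 2) / qPoch q (b * q) k / qPoch q t N *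
        (qBinom q N n * qPoch q q n * qPoch q t (N - n) * t ^ n * gauss q n k) := by
    refine Finset.sum_congr rfl fun n hn => ?_
    have hnN : n ≤ N := Nat.le_of_lt_succ (Finset.mem_range.mp hn)
    -- The Gaussian binomials vanish for `n < k`, so the range of `k` need not depend on `n`.
    have hsub : range (n + 1) ⊆ range (N + 1) :=
      Finset.range_subset_range.mpr (Nat.succ_le_succ hnN)
    have hz : ∀ k ∉ range (n + 1), gauss q n k = 0 := fun k hk =>
      gauss_eq_zero q n k (by rw [Finset.mem_range] at hk; omega)
    rw [← Finset.sum_subset hsub fun k _ hk => by rw [hz k hk, mul_zero, mul_zero]]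
    calc _ = qPoch q (a * q) n / qPoch q (b * q) n *
          (qBinom q N n * qPoch q q n * qPoch q t (N - n) * t ^ n / qPoch q t N) := by ring
      _ = _ := by
        rw [div_qPoch_eq_sum (qPoch_ne_zero_of_le hb hnN), Finset.sum_mul]
        exact Finset.sum_congr rfl fun k _ => by ring
  rw [hexpand, Finset.sum_comm, Finset.mul_sum]
  refine Finset.sum_congr rfl fun k hk => ?_
  have hkN : k ≤ N := Nat.le_of_lt_succ (Finset.mem_range.mp hk)
  have htk := qPoch_ne_zero_of_le ht (Nat.succ_le_succ hkN)
  have hbk := qPoch_ne_zero_of_le hb hkN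
  rw [← Finset.mul_sum, eq_div_of_mul_eq htk (fine_inner_sum hq hkN), homPoch_eq ha0,
    qPoch_succ q t N]
  rw [Nat.succ_eq_add_one, qPoch_succ'] at *
  have htk' := right_ne_zero_of_mul htk
  rw [mul_pow]
  field_simp
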